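/- arXiv:2304.04373 — 2 statements merged into one kernel-verified Lean document; each statement's English description precedes it below -/
import Mathlib

section
/- Let -∞ < a < b < ∞, 1 < p < ∞ with conjugate exponent p' = p/(p−1), let μ, w and τ be weights on [a,b], and let Φ be a Young function that is submultiplicative and invertible on [0,∞) such that Λ(t) = Φ(t^{1/p}) is convex. Define T(p,Φ,μ,τ,w) := sup_{a<x<b} { [Φ^{-1}(μ[a,x]^{-1/2})]^{-2} · (∫_x^b τ(t)^{p'} w(t)^{1−p'} dt)^{1/p'} }. If T(p,Φ,μ,τ,w) < ∞, then for every f ∈ L_w^p[a,b], ‖ x ↦ ∫_x^b f(t) τ(t) dt ‖_{L_μ^Φ[a,b]} ≤ C₀(Φ) · T(p,Φ,μ,τ,w) · ‖f‖_{L_w^p[a,b]}, where C₀(Φ) := 2·[Φ^{-1}(1/2)]^{-1}. -/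
open MeasureTheory Set Filter
open scoped ENNReal NNReal

noncomputable section

/-- A Young function: even, convex, vanishing at `0`, nonnegative, tending to `∞`. -/
def IsYoung (Φ : ℝ → ℝ) : Prop :=
  ConvexOn ℝ Set.univ Φ ∧ (∀ t, Φ (-t) = Φ t) ∧ Φ 0 = 0 ∧ (∀ t, 0 ≤ Φ t) ∧
    Filter.Tendsto Φ Filter.atTop Filter.atTop

/-- A weight on `[a,b]`: nonnegative, measurable, positive a.e. on `[a,b]`. -/
def IsWeight (w : ℝ → ℝ) (a b : ℝ) : Prop :=
  Measurable w ∧ (∀ x, 0 ≤ w x) ∧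
    ∀ᵐ x ∂(MeasureTheory.volume.restrict (Set.Icc a b)), 0 < w x

/-- `Φ` is submultiplicative on `[0,∞)`. -/
def Submult (Φ : ℝ → ℝ) : Prop :=
  ∀ s t : ℝ, 0 ≤ s → 0 ≤ t → Φ (s * t) ≤ Φ s * Φ t

/-- `Φinv` is the inverse of `Φ` restricted to `[0,∞)`. -/
def IsYoungInv (Φ Φinv : ℝ → ℝ) : Prop :=
  (∀ t, 0 ≤ t → 0 ≤ Φinv t) ∧ (∀ t, 0 ≤ t → Φ (Φinv t) = t) ∧
    (∀ t, 0 ≤ t → Φinv (Φ t) = t)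

/-- `μ[x,y] := ∫ₓ^y μ(t) dt`, as an extended nonnegative real. -/
def wInt (μ : ℝ → ℝ) (x y : ℝ) : ℝ≥0∞ :=
  ∫⁻ t in Set.Icc x y, ENNReal.ofReal (μ t)

/-- The Luxemburg (gauge) norm of `f` on `[a,b]` w.r.t. the Young function `Φ`
and the weight `μ`: `inf {k > 0 : ∫ₐ^b Φ(f/k) μ ≤ 1}` (`∞` if no such `k`). -/
def luxNorm (Φ μ : ℝ → ℝ) (a b : ℝ) (f : ℝ → ℝ) : ℝ≥0∞ :=
  sInf {k : ℝ≥0∞ | ∃ c : ℝ, 0 < c ∧ k = ENNReal.ofReal c ∧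
    (∫⁻ x in Set.Icc a b, ENNReal.ofReal (Φ (f x / c) * μ x)) ≤ 1}

/-- `f` is Lipschitz on `[a,b]` and `f'` is a.e. its derivative on `(a,b)`. -/
def LipschitzWithDeriv (f f' : ℝ → ℝ) (a b : ℝ) : Prop :=
  (∃ K, LipschitzOnWith K f (Set.Icc a b)) ∧
    ∀ᵐ x ∂(MeasureTheory.volume.restrict (Set.Ioo a b)), HasDerivAt f (f' x) x

/-- The weighted `L^p` norm `(∫ₐ^b |g|^p w)^{1/p}`, as an extended nonnegative real. -/
def lpNorm (w : ℝ → ℝ) (p a b : ℝ) (g : ℝ → ℝ) : ℝ≥0∞ :=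
  (∫⁻ t in Set.Icc a b, ENNReal.ofReal (|g t| ^ p * w t)) ^ (1 / p)

/-- The Luxemburg (gauge) norm on a general measure space. -/
def luxNormGen {Ω : Type*} [MeasurableSpace Ω] (Φ : ℝ → ℝ) (μ : Measure Ω)
    (f : Ω → ℝ) : ℝ≥0∞ :=
  sInf {k : ℝ≥0∞ | ∃ c : ℝ, 0 < c ∧ k = ENNReal.ofReal c ∧
    (∫⁻ x, ENNReal.ofReal (Φ (f x / c)) ∂μ) ≤ 1}

/-- The Luxemburg (gauge) norm for an extended-real-valued Young function. -/
def luxNormE {Ω : Type*} [MeasurableSpace Ω] (Ψ : ℝ → ℝ≥0∞) (μ : Measure Ω)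
    (f : Ω → ℝ) : ℝ≥0∞ :=
  sInf {k : ℝ≥0∞ | ∃ c : ℝ, 0 < c ∧ k = ENNReal.ofReal c ∧
    (∫⁻ x, Ψ (f x / c) ∂μ) ≤ 1}

/-! With `q` the exponent conjugate to `p`, put `m = μ dt`, `ρ = τ^q w^(1-q) dt` and
`k x = Φ⁻¹(m(Iic x)^(-1/2))`, so that the hypothesis on `T` reads `ρ(Ici x)^(1/q) ≤ T k(x)²`, and
write `|f| τ dt = h dρ`, so that `∫ h^p dρ ≤ ∫ |f|^p w dt`. Hölder's inequality with the factors
`h ρ(Ici t)^(1/(2q))` and `ρ(Ici t)^(-1/(2q))` gives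
`∫_x^b |f| τ dt ≤ 2 T k(x) (∫_{Ici x} (h k)^p dρ)^(1/p)`,
because `∫_{Ici x} ρ(Ici t)^(-1/2) dρ ≤ 2 ρ(Ici x)^(1/2)` for every measure `ρ`. Normalise `h^p dρ`
to a measure `ν` of mass at most one. Jensen's inequality for the convex function `Φ(t^(1/p))`
followed by submultiplicativity bounds `Φ` of the normalised left-hand side by
`∫_{Ici x} Φ(k x) Φ(k t) dν(t) = ∫_{Ici x} m(Iic x)^(-1/2) m(Iic t)^(-1/2) dν(t)`.
Integrating in `dm(x)`, exchanging the integrals and using `∫_{Iic t} m(Iic x)^(-1/2) dm ≤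
2 m(Iic t)^(1/2)` leaves `2 ν(univ) ≤ 2`. The factor `Φ⁻¹(1/2)` brings this down to one.
-/

theorem rpow_half_le_of_le_mul_sq {A T k : ℝ≥0∞} (h : A ≤ T * k ^ 2) :
    A ^ (1 / 2 : ℝ) ≤ T ^ (1 / 2 : ℝ) * k := by
  calc
    _ ≤ (T * k ^ 2) ^ (1 / 2 : ℝ) := by gcongr
    _ = _ := by
      rw [ENNReal.mul_rpow_of_nonneg _ _ (by norm_num), ← ENNReal.rpow_natCast,
        ← ENNReal.rpow_mul]
      norm_num

theorem lintegral_const_mul_rpow {α : Type*} [MeasurableSpace α] {ν : Measure α} {p : ℝ}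
    (hp : 0 < p) {c : ℝ≥0∞} (hc : c ≠ ⊤) (g : α → ℝ≥0∞) :
    (∫⁻ t, (c * g t) ^ p ∂ν) ^ (1 / p) = c * (∫⁻ t, g t ^ p ∂ν) ^ (1 / p) := by
  simp only [ENNReal.mul_rpow_of_nonneg _ _ hp.le]
  rw [lintegral_const_mul' _ _ (ENNReal.rpow_ne_top_of_nonneg hp.le hc),
    ENNReal.mul_rpow_of_nonneg _ _ (by positivity), ← ENNReal.rpow_mul, mul_one_div_cancel hp.ne',
    ENNReal.rpow_one]

section DistributionFunction

variable {α : Type*} [MeasurableSpace α]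

theorem measure_le_rpow_neg_le {G : α → ℝ≥0∞} {ν : Measure α} (hG : ∀ s, ν {x | G x ≤ s} ≤ s)
    {θ : ℝ} (hθ : 0 < θ) (t : ℝ≥0∞) : ν {x | t ≤ G x ^ (-θ)} ≤ t⁻¹ ^ θ⁻¹ := by
  simpa only [ENNReal.rpow_neg, ENNReal.le_inv_iff_le_inv (a := t), ← ENNReal.le_rpow_inv_iff hθ]
    using hG (t⁻¹ ^ θ⁻¹)

theorem setLIntegral_Ioi_inv_rpow_inv {θ r : ℝ} (hθ0 : 0 < θ) (hθ1 : θ < 1) (hr : 0 < r) :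
    ∫⁻ t in Ioi r, (ENNReal.ofReal t)⁻¹ ^ θ⁻¹ =
      ENNReal.ofReal (θ / (1 - θ) * r ^ (1 - θ⁻¹)) := by
  have hexp : -θ⁻¹ < -1 := neg_lt_neg ((one_lt_inv₀ hθ0).2 hθ1)
  calc
    _ = ∫⁻ t in Ioi r, ENNReal.ofReal (t ^ (-θ⁻¹)) := by
      refine setLIntegral_congr_fun measurableSet_Ioi fun t ht ↦ ?_
      rw [ENNReal.inv_rpow, ← ENNReal.rpow_neg, ENNReal.ofReal_rpow_of_pos (hr.trans ht)]
    _ = ENNReal.ofReal (∫ t in Ioi r, t ^ (-θ⁻¹)) := by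
      refine (ofReal_integral_eq_lintegral_ofReal (integrableOn_Ioi_rpow_of_lt hexp hr) ?_).symm
      filter_upwards [ae_restrict_mem measurableSet_Ioi] with t ht
      exact Real.rpow_nonneg (hr.trans ht).le _
    _ = _ := by
      have h1 : 1 - θ ≠ 0 := by linarith
      rw [integral_Ioi_rpow_of_lt hexp hr, show -θ⁻¹ + 1 = 1 - θ⁻¹ by ring]
      congr 1
      rw [show 1 - θ⁻¹ = -((1 - θ) / θ) by field_simp; ring]
      field_simp

theorem setLIntegral_Ioi_min_inv_rpow_inv_le {θ m : ℝ} (hθ0 : 0 < θ) (hθ1 : θ < 1) (hm : 0 < m) :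
    ∫⁻ t in Ioi 0, min (ENNReal.ofReal m) ((ENNReal.ofReal t)⁻¹ ^ θ⁻¹) ≤
      ENNReal.ofReal ((1 - θ)⁻¹ * m ^ (1 - θ)) := by
  have h1θ : 0 < 1 - θ := sub_pos.2 hθ1
  set r := m ^ (-θ)
  have hr : 0 < r := Real.rpow_pos_of_pos hm _
  have hlow : ∫⁻ t in Ioc 0 r, min (ENNReal.ofReal m) ((ENNReal.ofReal t)⁻¹ ^ θ⁻¹) ≤
      ENNReal.ofReal (m ^ (1 - θ)) := by
    calc
      _ ≤ ∫⁻ _ in Ioc 0 r, ENNReal.ofReal m := lintegral_mono fun _ ↦ min_le_left _ _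
      _ = ENNReal.ofReal (m ^ (1 - θ)) := by
        rw [setLIntegral_const, Real.volume_Ioc, ← ENNReal.ofReal_mul hm.le, sub_zero,
          sub_eq_add_neg, Real.rpow_add hm, Real.rpow_one]
  have hhigh : ∫⁻ t in Ioi r, min (ENNReal.ofReal m) ((ENNReal.ofReal t)⁻¹ ^ θ⁻¹) ≤
      ENNReal.ofReal (θ / (1 - θ) * m ^ (1 - θ)) := by
    calc
      _ ≤ ∫⁻ t in Ioi r, (ENNReal.ofReal t)⁻¹ ^ θ⁻¹ := lintegral_mono fun _ ↦ min_le_right _ _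
      _ = ENNReal.ofReal (θ / (1 - θ) * m ^ (1 - θ)) := by
        rw [setLIntegral_Ioi_inv_rpow_inv hθ0 hθ1 hr, ← Real.rpow_mul hm.le]
        congr 3
        field_simp
        ring
  calc
    _ ≤ ENNReal.ofReal (m ^ (1 - θ)) + ENNReal.ofReal (θ / (1 - θ) * m ^ (1 - θ)) := by
      rw [← Ioc_union_Ioi_eq_Ioi hr.le]
      exact (lintegral_union_le _ _ _).trans (add_le_add hlow hhigh)
    _ = ENNReal.ofReal ((1 - θ)⁻¹ * m ^ (1 - θ)) := by
      rw [← ENNReal.ofReal_add (by positivity) (by positivity)]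
      congr 1
      field_simp
      ring

theorem lintegral_rpow_neg_le {ν : Measure α} {G : α → ℝ≥0∞} (hGm : Measurable G)
    (hG : ∀ s, ν {x | G x ≤ s} ≤ s) {θ : ℝ} (hθ0 : 0 < θ) (hθ1 : θ < 1) :
    ∫⁻ x, G x ^ (-θ) ∂ν ≤ ENNReal.ofReal (1 - θ)⁻¹ * ν univ ^ (1 - θ) := by
  have h1θ : 0 < 1 - θ := sub_pos.2 hθ1
  rcases eq_or_ne (ν univ) 0 with h0 | h0
  · simp [Measure.measure_univ_eq_zero.1 h0]
  rcases eq_or_ne (ν univ) ⊤ with htop | htop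
  · simp [htop, h1θ]
  have hm : 0 < (ν univ).toReal := ENNReal.toReal_pos h0 htop
  have hfinite : ∀ᵐ x ∂ν, ENNReal.ofReal (G x ^ (-θ)).toReal = G x ^ (-θ) := by
    have hG0 : ∀ᵐ x ∂ν, G x ≠ 0 := by simpa [ae_iff] using hG 0
    filter_upwards [hG0] with x hx
    exact ENNReal.ofReal_toReal (by simp [hx, hθ0.le])
  calc
    _ = ∫⁻ x, ENNReal.ofReal (G x ^ (-θ)).toReal ∂ν := (lintegral_congr_ae hfinite).symm
    _ = ∫⁻ t in Ioi 0, ν {x | t ≤ (G x ^ (-θ)).toReal} :=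
      lintegral_eq_lintegral_meas_le ν (ae_of_all _ fun _ ↦ ENNReal.toReal_nonneg)
        (hGm.pow_const _).ennreal_toReal.aemeasurable
    _ ≤ ∫⁻ t in Ioi 0, min (ENNReal.ofReal (ν univ).toReal) ((ENNReal.ofReal t)⁻¹ ^ θ⁻¹) := by
      refine lintegral_mono fun t ↦ le_min ?_ ?_
      · exact (measure_mono (subset_univ _)).trans_eq (ENNReal.ofReal_toReal htop).symm
      · exact (measure_mono fun x hx ↦ ENNReal.ofReal_le_of_le_toReal hx).trans
          (measure_le_rpow_neg_le hG hθ0 (ENNReal.ofReal t))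
    _ ≤ ENNReal.ofReal ((1 - θ)⁻¹ * (ν univ).toReal ^ (1 - θ)) :=
      setLIntegral_Ioi_min_inv_rpow_inv_le hθ0 hθ1 hm
    _ = ENNReal.ofReal (1 - θ)⁻¹ * ν univ ^ (1 - θ) := by
      rw [ENNReal.ofReal_mul (inv_nonneg.2 h1θ.le), ← ENNReal.ofReal_rpow_of_pos hm,
        ENNReal.ofReal_toReal htop]

variable [LinearOrder α]

theorem measure_setOf_measure_Iic_le [TopologicalSpace α] [OrderTopology α]
    [SecondCountableTopology α] (ν : Measure α) (s : ℝ≥0∞) : ν {x | ν (Iic x) ≤ s} ≤ s := by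
  set A := {x | ν (Iic x) ≤ s}
  by_cases hmax : ∃ x ∈ A, ∀ y ∈ A, y ≤ x
  · obtain ⟨x, hx, hAx⟩ := hmax
    exact (measure_mono hAx).trans hx
  push Not at hmax
  -- Without a maximum, `A` is covered by the open rays `Iio y`, `y ∈ A`, hence by countably many.
  obtain ⟨B, hBA, hB, hcover⟩ :=
    TopologicalSpace.isOpen_biUnion_countable A Iio fun _ _ ↦ isOpen_Iio
  have hAB : A ⊆ ⋃ y ∈ B, Iic y := fun x hx ↦ by
    obtain ⟨y, hy, hxy⟩ := hmax x hx
    exact biUnion_mono subset_rfl (fun _ _ ↦ Iio_subset_Iic_self)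
      (hcover.superset (mem_biUnion hy hxy))
  refine (measure_mono hAB).trans ?_
  rw [measure_biUnion_eq_iSup hB fun x hx y hy ↦ ⟨max x y, max_rec' (· ∈ B) hx hy,
    Iic_subset_Iic.2 (le_max_left x y), Iic_subset_Iic.2 (le_max_right x y)⟩]
  exact iSup₂_le hBA

theorem measure_setOf_measure_Ici_le [TopologicalSpace α] [OrderTopology α]
    [SecondCountableTopology α] (ν : Measure α) (s : ℝ≥0∞) : ν {x | ν (Ici x) ≤ s} ≤ s :=
  measure_setOf_measure_Iic_le (α := αᵒᵈ) ν s

variable [TopologicalSpace α] [OrderTopology α] [SecondCountableTopology α] [BorelSpace α]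
  {θ : ℝ}

theorem setLIntegral_Iic_measure_Iic_rpow_neg_le (ν : Measure α) (hθ0 : 0 < θ) (hθ1 : θ < 1)
    (t : α) : ∫⁻ x in Iic t, ν (Iic x) ^ (-θ) ∂ν ≤
      ENNReal.ofReal (1 - θ)⁻¹ * ν (Iic t) ^ (1 - θ) := by
  have hmono : Monotone fun x ↦ ν.restrict (Iic t) (Iic x) :=
    fun _ _ h ↦ measure_mono (Iic_subset_Iic.2 h)
  have hrestrict : ∀ x ∈ Iic t, ν.restrict (Iic t) (Iic x) = ν (Iic x) := fun x hx ↦ by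
    rw [Measure.restrict_apply measurableSet_Iic, Iic_inter_Iic, inf_of_le_left hx]
  calc
    _ = ∫⁻ x in Iic t, ν.restrict (Iic t) (Iic x) ^ (-θ) ∂ν :=
      setLIntegral_congr_fun measurableSet_Iic fun x hx ↦ by rw [hrestrict x hx]
    _ ≤ ENNReal.ofReal (1 - θ)⁻¹ * ν.restrict (Iic t) univ ^ (1 - θ) :=
      lintegral_rpow_neg_le hmono.measurable (measure_setOf_measure_Iic_le _) hθ0 hθ1
    _ = _ := by rw [Measure.restrict_apply_univ]

theorem setLIntegral_Ici_measure_Ici_rpow_neg_le (ν : Measure α) (hθ0 : 0 < θ) (hθ1 : θ < 1)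
    (t : α) : ∫⁻ x in Ici t, ν (Ici x) ^ (-θ) ∂ν ≤
      ENNReal.ofReal (1 - θ)⁻¹ * ν (Ici t) ^ (1 - θ) :=
  setLIntegral_Iic_measure_Iic_rpow_neg_le (α := αᵒᵈ) ν hθ0 hθ1 t

theorem lintegral_setLIntegral_Ici_swap (m ν : Measure α) [SFinite m] [SFinite ν]
    {G : α → α → ℝ≥0∞} (hG : Measurable (Function.uncurry G)) :
    ∫⁻ x, ∫⁻ t in Ici x, G x t ∂ν ∂m = ∫⁻ t, ∫⁻ x in Iic t, G x t ∂m ∂ν := by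
  have hle : MeasurableSet {z : α × α | z.1 ≤ z.2} := measurableSet_le measurable_fst measurable_snd
  simp only [← lintegral_indicator measurableSet_Ici, ← lintegral_indicator measurableSet_Iic]
  exact lintegral_lintegral_swap (f := fun x t ↦ (Ici x).indicator (G x) t)
    (hG.indicator hle).aemeasurable

theorem lintegral_setLIntegral_Ici_rpow_mul_rpow_le (m ν : Measure α) [SFinite m] [SFinite ν]
    (hθ0 : 0 < θ) (hθ1 : θ < 1) :
    ∫⁻ x, ∫⁻ t in Ici x, m (Iic x) ^ (-θ) * m (Iic t) ^ (-(1 - θ)) ∂ν ∂m ≤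
      ENNReal.ofReal (1 - θ)⁻¹ * ν univ := by
  have hmono : Monotone fun x ↦ m (Iic x) := fun _ _ h ↦ measure_mono (Iic_subset_Iic.2 h)
  have hm : Measurable fun x ↦ m (Iic x) := hmono.measurable
  calc
    _ = ∫⁻ t, ∫⁻ x in Iic t, m (Iic x) ^ (-θ) * m (Iic t) ^ (-(1 - θ)) ∂m ∂ν :=
      lintegral_setLIntegral_Ici_swap m ν
        (((hm.comp measurable_fst).pow_const _).mul ((hm.comp measurable_snd).pow_const _))
    _ ≤ ∫⁻ _, ENNReal.ofReal (1 - θ)⁻¹ ∂ν := by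
      refine lintegral_mono fun t ↦ ?_
      rw [lintegral_mul_const _ (hm.pow_const _), ENNReal.rpow_neg]
      exact ENNReal.div_le_of_le_mul (setLIntegral_Iic_measure_Iic_rpow_neg_le m hθ0 hθ1 t)
    _ = _ := lintegral_const _

theorem setLIntegral_Ici_le_mul {p q : ℝ} (hpq : p.HolderConjugate q) (ρ : Measure α) {x : α}
    (hx : ρ (Ici x) ≠ ⊤) {h : α → ℝ≥0∞} (hh : Measurable h) (hθ0 : 0 < θ) (hθ1 : θ < 1) :
    ∫⁻ t in Ici x, h t ∂ρ ≤
      (∫⁻ t in Ici x, (h t * ρ (Ici t) ^ (θ / q)) ^ p ∂ρ) ^ (1 / p) *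
        (ENNReal.ofReal (1 - θ)⁻¹ * ρ (Ici x) ^ (1 - θ)) ^ (1 / q) := by
  have hanti : Antitone fun t ↦ ρ (Ici t) := fun _ _ h ↦ measure_mono (Ici_subset_Ici.2 h)
  have hW : Measurable fun t ↦ ρ (Ici t) := hanti.measurable
  have hpos : ∀ᵐ t ∂ρ, ρ (Ici t) ≠ 0 := by
    simpa [ae_iff] using measure_setOf_measure_Ici_le ρ 0
  calc
    _ = ∫⁻ t in Ici x, h t * ρ (Ici t) ^ (θ / q) * ρ (Ici t) ^ (-θ / q) ∂ρ := by
      refine lintegral_congr_ae ?_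
      filter_upwards [ae_restrict_of_ae hpos, ae_restrict_mem measurableSet_Ici] with t ht0 ht
      rw [mul_assoc, ← ENNReal.rpow_add _ _ ht0 (ne_top_of_le_ne_top hx (hanti ht)), neg_div,
        add_neg_cancel, ENNReal.rpow_zero, mul_one]
    _ ≤ (∫⁻ t in Ici x, (h t * ρ (Ici t) ^ (θ / q)) ^ p ∂ρ) ^ (1 / p) *
        (∫⁻ t in Ici x, (ρ (Ici t) ^ (-θ / q)) ^ q ∂ρ) ^ (1 / q) :=
      ENNReal.lintegral_mul_le_Lp_mul_Lq _ hpq (hh.mul (hW.pow_const _)).aemeasurable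
        (hW.pow_const _).aemeasurable
    _ ≤ _ := by
      have hq := hpq.symm.pos
      simp only [← ENNReal.rpow_mul (ρ _), div_mul_cancel₀ _ hq.ne']
      gcongr
      exact setLIntegral_Ici_measure_Ici_rpow_neg_le ρ hθ0 hθ1 x

theorem setLIntegral_Ici_le_two_mul {p q : ℝ} (hpq : p.HolderConjugate q) (ρ : Measure α)
    {T : ℝ≥0∞} (hT : T ≠ ⊤) {k : α → ℝ≥0∞} (hk : ∀ᵐ t ∂ρ, ρ (Ici t) ^ (1 / q) ≤ T * k t ^ 2)
    {x : α} (hkx : k x ≠ ⊤) (hx : ρ (Ici x) ^ (1 / q) ≤ T * k x ^ 2) {h : α → ℝ≥0∞}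
    (hh : Measurable h) :
    ∫⁻ t in Ici x, h t ∂ρ ≤ 2 * T * k x * (∫⁻ t in Ici x, (h t * k t) ^ p ∂ρ) ^ (1 / p) := by
  have hp := hpq.pos
  have hq := hpq.symm.pos
  have hρx : ρ (Ici x) ≠ ⊤ := fun htop ↦ by
    rw [htop, ENNReal.top_rpow_of_pos (by positivity), top_le_iff] at hx
    exact ENNReal.mul_ne_top hT (ENNReal.pow_ne_top hkx) hx
  have hsqrt : ∀ t, ρ (Ici t) ^ (1 / q) ≤ T * k t ^ 2 →
      ρ (Ici t) ^ (1 / 2 / q) ≤ T ^ (1 / 2 : ℝ) * k t := fun t ht ↦ by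
    rw [show 1 / 2 / q = 1 / q * (1 / 2) by ring, ENNReal.rpow_mul]
    exact rpow_half_le_of_le_mul_sq ht
  have hleft : (∫⁻ t in Ici x, (h t * ρ (Ici t) ^ (1 / 2 / q)) ^ p ∂ρ) ^ (1 / p) ≤
      T ^ (1 / 2 : ℝ) * (∫⁻ t in Ici x, (h t * k t) ^ p ∂ρ) ^ (1 / p) := by
    rw [← lintegral_const_mul_rpow hp (ENNReal.rpow_ne_top_of_nonneg (by norm_num) hT)]
    gcongr ?_ ^ (1 / p)
    refine lintegral_mono_ae ((ae_restrict_of_ae hk).mono fun t ht ↦ ?_)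
    rw [mul_left_comm]
    gcongr
    exact hsqrt t ht
  have hright : (ENNReal.ofReal (1 - 1 / 2)⁻¹ * ρ (Ici x) ^ (1 - 1 / 2 : ℝ)) ^ (1 / q) ≤
      2 * (T ^ (1 / 2 : ℝ) * k x) := by
    rw [ENNReal.mul_rpow_of_nonneg _ _ (by positivity), ← ENNReal.rpow_mul,
      show (1 - 1 / 2 : ℝ) * (1 / q) = 1 / 2 / q by ring, show (1 - 1 / 2 : ℝ)⁻¹ = 2 by norm_num,
      ENNReal.ofReal_ofNat]
    gcongr
    · exact (ENNReal.rpow_le_rpow_of_exponent_le one_le_two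
        ((div_le_one hq).2 hpq.symm.lt.le)).trans_eq (ENNReal.rpow_one 2)
    · exact hsqrt x hx
  calc
    _ ≤ _ := setLIntegral_Ici_le_mul hpq ρ hρx hh (θ := 1 / 2) (by norm_num) (by norm_num)
    _ ≤ T ^ (1 / 2 : ℝ) * (∫⁻ t in Ici x, (h t * k t) ^ p ∂ρ) ^ (1 / p) *
        (2 * (T ^ (1 / 2 : ℝ) * k x)) := mul_le_mul' hleft hright
    _ = 2 * (T ^ (1 / 2 : ℝ) * T ^ (1 / 2 : ℝ)) * k x *
        (∫⁻ t in Ici x, (h t * k t) ^ p ∂ρ) ^ (1 / p) := by ring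
    _ = _ := by
      rw [← ENNReal.rpow_add_of_nonneg _ _ (by norm_num) (by norm_num), add_halves,
        ENNReal.rpow_one]

end DistributionFunction

section Jensen

variable {α : Type*} [MeasurableSpace α]

theorem exists_supporting_line {S : Set ℝ} {f : ℝ → ℝ} (hf : ConvexOn ℝ S f) {y : ℝ}
    (hy : y ∈ interior S) : ∃ c, ∀ z ∈ S, f y + c * (z - y) ≤ f z := by
  refine ⟨derivWithin f (Ioi y) y, fun z hz ↦ ?_⟩
  rcases lt_trichotomy z y with hzy | rfl | hyz
  · have hslope := (hf.slope_le_leftDeriv_of_mem_interior hz hy hzy).trans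
      (hf.leftDeriv_le_rightDeriv_of_mem_interior hy)
    rw [slope_def_field, div_le_iff₀ (sub_pos.2 hzy)] at hslope
    linarith
  · simp
  · have hslope := hf.rightDeriv_le_slope_of_mem_interior hy hz hyz
    rw [slope_def_field, le_div_iff₀ (sub_pos.2 hyz)] at hslope
    linarith

theorem ofReal_map_le_lintegral_of_convexOn {Λ : ℝ → ℝ} (hΛ : ConvexOn ℝ univ Λ) (hΛ0 : Λ 0 = 0)
    (hΛnn : ∀ t, 0 ≤ Λ t) {ν : Measure α} (hν : ν univ ≤ 1) {h : α → ℝ} {y : ℝ} (hy : 0 ≤ y)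
    (hyh : ENNReal.ofReal y ≤ ∫⁻ t, ENNReal.ofReal (h t) ∂ν) :
    ENNReal.ofReal (Λ y) ≤ ∫⁻ t, ENNReal.ofReal (Λ (h t)) ∂ν := by
  obtain rfl | hypos := hy.eq_or_lt
  · simp [hΛ0]
  obtain ⟨c, hc⟩ := exists_supporting_line hΛ (y := y) (by simp)
  have hd : 0 ≤ c * y - Λ y := by linarith [hc 0 (mem_univ 0)]
  have hc0 : 0 ≤ c := nonneg_of_mul_nonneg_left (by linarith [hΛnn y]) hypos
  set d := ENNReal.ofReal (c * y - Λ y)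
  -- Adding `d` keeps the supporting line `c t - d` free of subtraction in `ℝ≥0∞`.
  refine (ENNReal.add_le_add_iff_right (a := d) ENNReal.ofReal_ne_top).1 ?_
  calc
    ENNReal.ofReal (Λ y) + d = ENNReal.ofReal c * ENNReal.ofReal y := by
      rw [← ENNReal.ofReal_add (hΛnn y) hd, ← ENNReal.ofReal_mul hc0, add_sub_cancel]
    _ ≤ ENNReal.ofReal c * ∫⁻ t, ENNReal.ofReal (h t) ∂ν := by gcongr
    _ = ∫⁻ t, ENNReal.ofReal (c * h t) ∂ν := by
      simp only [ENNReal.ofReal_mul hc0, lintegral_const_mul' _ _ ENNReal.ofReal_ne_top]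
    _ ≤ ∫⁻ t, (ENNReal.ofReal (Λ (h t)) + d) ∂ν := by
      refine lintegral_mono fun t ↦ ?_
      rw [← ENNReal.ofReal_add (hΛnn _) hd]
      exact ENNReal.ofReal_le_ofReal (by linarith [hc (h t) (mem_univ _)])
    _ = ∫⁻ t, ENNReal.ofReal (Λ (h t)) ∂ν + d * ν univ := by
      rw [lintegral_add_right _ measurable_const, lintegral_const]
    _ ≤ ∫⁻ t, ENNReal.ofReal (Λ (h t)) ∂ν + d := by
      gcongr
      exact mul_le_of_le_one_right' hν

end Jensen

section Young

variable {α : Type*} [MeasurableSpace α] {Φ : ℝ → ℝ} {p : ℝ}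

theorem IsYoung.apply_abs (hΦ : IsYoung Φ) (s : ℝ) : Φ |s| = Φ s := by
  rcases abs_choice s with h | h <;> rw [h]
  exact hΦ.2.1 s

theorem IsYoung.ofReal_apply_le_lintegral (hΦ : IsYoung Φ) (hp : 0 < p)
    (hΛ : ConvexOn ℝ univ fun t ↦ Φ (|t| ^ (1 / p))) {ν : Measure α} (hν : ν univ ≤ 1) {u : ℝ}
    {g : α → ℝ} (hg : ∀ t, 0 ≤ g t)
    (hug : ENNReal.ofReal |u| ≤ (∫⁻ t, ENNReal.ofReal (g t) ^ p ∂ν) ^ (1 / p)) :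
    ENNReal.ofReal (Φ u) ≤ ∫⁻ t, ENNReal.ofReal (Φ (g t)) ∂ν := by
  have hroot : ∀ s : ℝ, 0 ≤ s → |s ^ p| ^ (1 / p) = s := fun s hs ↦ by
    rw [abs_of_nonneg (Real.rpow_nonneg hs p), one_div, Real.rpow_rpow_inv hs hp.ne']
  have hpow : ENNReal.ofReal (|u| ^ p) ≤ ∫⁻ t, ENNReal.ofReal (g t ^ p) ∂ν := by
    simpa only [one_div, ENNReal.le_rpow_inv_iff hp, ENNReal.ofReal_rpow_of_nonneg (hg _) hp.le,
      ENNReal.ofReal_rpow_of_nonneg (abs_nonneg u) hp.le] using hug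
  have hjensen := ofReal_map_le_lintegral_of_convexOn hΛ
    (by rw [abs_zero, Real.zero_rpow (one_div_pos.2 hp).ne', hΦ.2.2.1]) (fun _ ↦ hΦ.2.2.2.1 _) hν
    (by positivity) hpow
  simpa only [hroot _ (abs_nonneg u), hroot _ (hg _), hΦ.apply_abs] using hjensen

theorem IsYoung.lintegral_mul_le_one (hΦ : IsYoung Φ) (hsub : Submult Φ) {κ : ℝ} (hκ : 0 ≤ κ)
    (hΦκ : Φ κ ≤ 1 / 2) {m : Measure α} {U : α → ℝ}
    (hU : ∫⁻ x, ENNReal.ofReal (Φ (U x)) ∂m ≤ 2) :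
    ∫⁻ x, ENNReal.ofReal (Φ (κ * U x)) ∂m ≤ 1 := by
  calc
    _ ≤ ∫⁻ x, ENNReal.ofReal (1 / 2) * ENNReal.ofReal (Φ (U x)) ∂m := by
      refine lintegral_mono fun x ↦ ?_
      rw [← ENNReal.ofReal_mul (by norm_num), ← hΦ.apply_abs (κ * U x), abs_mul, abs_of_nonneg hκ,
        ← hΦ.apply_abs (U x)]
      exact ENNReal.ofReal_le_ofReal ((hsub _ _ hκ (abs_nonneg _)).trans
        (mul_le_mul_of_nonneg_right hΦκ (hΦ.2.2.2.1 _)))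
    _ ≤ ENNReal.ofReal (1 / 2) * 2 := by
      rw [lintegral_const_mul' _ _ ENNReal.ofReal_ne_top]
      gcongr
    _ = 1 := by
      rw [← ENNReal.ofReal_ofNat 2, ← ENNReal.ofReal_mul (by norm_num)]
      norm_num

theorem luxNormGen_le_of_forall_lintegral_le_one {m : Measure α} {F : α → ℝ} {B : ℝ≥0∞} {c : ℝ}
    (hc : 0 < c) (h : ∀ R : ℝ, 0 < R → B ≤ ENNReal.ofReal R →
      ∫⁻ x, ENNReal.ofReal (Φ (F x / (c * R))) ∂m ≤ 1) :
    luxNormGen Φ m F ≤ ENNReal.ofReal c * B := by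
  rcases eq_or_ne B ⊤ with rfl | hB
  · simp [hc]
  rw [mul_comm, ← ENNReal.div_le_iff (ENNReal.ofReal_pos.2 hc).ne' ENNReal.ofReal_ne_top]
  refine ENNReal.le_of_forall_pos_le_add fun ε hε _ ↦ ?_
  have hR : ENNReal.ofReal (B.toReal + ε) = B + ε := by
    rw [ENNReal.ofReal_add ENNReal.toReal_nonneg ε.coe_nonneg, ENNReal.ofReal_toReal hB,
      ENNReal.ofReal_coe_nnreal]
  have hR0 : 0 < B.toReal + ε := add_pos_of_nonneg_of_pos ENNReal.toReal_nonneg hε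
  refine ENNReal.div_le_of_le_mul ?_
  rw [mul_comm, ← hR, ← ENNReal.ofReal_mul hc.le]
  exact sInf_le ⟨c * (B.toReal + ε), mul_pos hc hR0, rfl, h _ hR0 (hR ▸ le_self_add)⟩

variable [LinearOrder α] [TopologicalSpace α] [OrderTopology α] [SecondCountableTopology α]
  [BorelSpace α]

theorem IsYoung.lintegral_le_two (hΦ : IsYoung Φ) (hsub : Submult Φ) (hp : 0 < p)
    (hΛ : ConvexOn ℝ univ fun t ↦ Φ (|t| ^ (1 / p))) {m ν : Measure α} [SFinite m]
    (hν : ν univ ≤ 1) {k : α → ℝ} (hk0 : ∀ x, 0 ≤ k x)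
    (hkm : ∀ᵐ x ∂m, ENNReal.ofReal (Φ (k x)) ≤ m (Iic x) ^ (-(1 / 2) : ℝ))
    (hkν : ∀ᵐ x ∂ν, ENNReal.ofReal (Φ (k x)) ≤ m (Iic x) ^ (-(1 / 2) : ℝ)) {U : α → ℝ}
    (hU : ∀ᵐ x ∂m, ENNReal.ofReal |U x| ≤
      ENNReal.ofReal (k x) * (∫⁻ t in Ici x, ENNReal.ofReal (k t) ^ p ∂ν) ^ (1 / p)) :
    ∫⁻ x, ENNReal.ofReal (Φ (U x)) ∂m ≤ 2 := by
  have : IsFiniteMeasure ν := ⟨hν.trans_lt ENNReal.one_lt_top⟩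
  have hpoint : ∀ᵐ x ∂m, ENNReal.ofReal (Φ (U x)) ≤
      ∫⁻ t in Ici x, m (Iic x) ^ (-(1 / 2) : ℝ) * m (Iic t) ^ (-(1 - 1 / 2) : ℝ) ∂ν := by
    filter_upwards [hkm, hU] with x hkx hUx
    rw [← lintegral_const_mul_rpow hp ENNReal.ofReal_ne_top] at hUx
    simp only [← ENNReal.ofReal_mul (hk0 x)] at hUx
    calc
      _ ≤ ∫⁻ t in Ici x, ENNReal.ofReal (Φ (k x * k t)) ∂ν :=
        hΦ.ofReal_apply_le_lintegral hp hΛ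
          ((Measure.restrict_apply_le _ _).trans hν)
          (fun t ↦ mul_nonneg (hk0 x) (hk0 t)) hUx
      _ ≤ _ := by
        refine lintegral_mono_ae ((ae_restrict_of_ae hkν).mono fun t hkt ↦ ?_)
        calc
          _ ≤ ENNReal.ofReal (Φ (k x)) * ENNReal.ofReal (Φ (k t)) := by
            rw [← ENNReal.ofReal_mul (hΦ.2.2.2.1 _)]
            exact ENNReal.ofReal_le_ofReal (hsub _ _ (hk0 x) (hk0 t))
          _ ≤ _ := by
            rw [sub_half]
            exact mul_le_mul' hkx hkt
  calc
    _ ≤ _ := lintegral_mono_ae hpoint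
    _ ≤ ENNReal.ofReal (1 - 1 / 2)⁻¹ * ν univ :=
      lintegral_setLIntegral_Ici_rpow_mul_rpow_le m ν (by norm_num) (by norm_num)
    _ ≤ 2 * 1 := by
      gcongr
      norm_num
    _ = 2 := mul_one 2

theorem IsYoung.lintegral_div_le_two (hΦ : IsYoung Φ) (hsub : Submult Φ) {q : ℝ}
    (hpq : p.HolderConjugate q) (hΛ : ConvexOn ℝ univ fun t ↦ Φ (|t| ^ (1 / p)))
    {m ρ : Measure α} [SFinite m] {s : Set α} (hms : ∀ᵐ x ∂m, x ∈ s) (hρs : ∀ᵐ x ∂ρ, x ∈ s)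
    {k : α → ℝ} (hk0 : ∀ x, 0 ≤ k x)
    (hkm : ∀ x ∈ s, ENNReal.ofReal (Φ (k x)) ≤ m (Iic x) ^ (-(1 / 2) : ℝ))
    {T : ℝ≥0∞} (hT : T ≠ ⊤)
    (hkρ : ∀ x ∈ s, ρ (Ici x) ^ (1 / q) ≤ T * ENNReal.ofReal (k x) ^ 2)
    {h : α → ℝ≥0∞} (hh : Measurable h) {F : α → ℝ}
    (hF : ∀ x ∈ s, ENNReal.ofReal |F x| ≤ ∫⁻ t in Ici x, h t ∂ρ) {R : ℝ} (hR : 0 < R)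
    (hhR : 2 * T * (∫⁻ t, h t ^ p ∂ρ) ^ (1 / p) ≤ ENNReal.ofReal R) :
    ∫⁻ x, ENNReal.ofReal (Φ (F x / R)) ∂m ≤ 2 := by
  have hp := hpq.pos
  set c := 2 * T / ENNReal.ofReal R
  have hc : c ≠ ⊤ := ENNReal.div_ne_top (ENNReal.mul_ne_top ENNReal.ofNat_ne_top hT)
    (ENNReal.ofReal_pos.2 hR).ne'
  have hdm : Measurable fun t ↦ (c * h t) ^ p := (hh.const_mul c).pow_const p
  have hd1 : ∫⁻ t, (c * h t) ^ p ∂ρ ≤ 1 := by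
    have hroot : (∫⁻ t, (c * h t) ^ p ∂ρ) ^ (1 / p) ≤ 1 := by
      rw [lintegral_const_mul_rpow hp hc, ← ENNReal.mul_div_right_comm]
      exact ENNReal.div_le_of_le_mul (hhR.trans_eq (one_mul _).symm)
    simpa only [one_div, ENNReal.rpow_inv_le_iff hp, ENNReal.one_rpow] using hroot
  -- Normalising by an upper bound `R > 0` instead of by the norm itself covers `T = 0` and `h = 0`.
  set ν := ρ.withDensity fun t ↦ (c * h t) ^ p
  have hν : ν univ ≤ 1 := by rwa [withDensity_apply _ .univ, setLIntegral_univ]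
  have hνk : ∀ x, (∫⁻ t in Ici x, ENNReal.ofReal (k t) ^ p ∂ν) ^ (1 / p) =
      c * (∫⁻ t in Ici x, (h t * ENNReal.ofReal (k t)) ^ p ∂ρ) ^ (1 / p) := fun x ↦ by
    have hdtop : ∀ᵐ t ∂ρ, (c * h t) ^ p < ⊤ :=
      ae_lt_top hdm (hd1.trans_lt ENNReal.one_lt_top).ne
    rw [← lintegral_const_mul_rpow hp hc, restrict_withDensity measurableSet_Ici,
      lintegral_withDensity_eq_lintegral_mul_non_measurable _ hdm (ae_restrict_of_ae hdtop)]
    simp only [Pi.mul_apply, ← ENNReal.mul_rpow_of_nonneg _ _ hp.le, mul_assoc]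
  have hνs : ∀ᵐ x ∂ν, x ∈ s := (withDensity_absolutelyContinuous ρ _).ae_le hρs
  refine hΦ.lintegral_le_two hsub hp hΛ hν hk0 (hms.mono hkm) (hνs.mono hkm)
    (hms.mono fun x hx ↦ ?_)
  calc
    _ = ENNReal.ofReal |F x| / ENNReal.ofReal R := by
      rw [abs_div, abs_of_pos hR, ENNReal.ofReal_div_of_pos hR]
    _ ≤ 2 * T * ENNReal.ofReal (k x) *
        (∫⁻ t in Ici x, (h t * ENNReal.ofReal (k t)) ^ p ∂ρ) ^ (1 / p) / ENNReal.ofReal R := by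
      gcongr
      exact (hF x hx).trans (setLIntegral_Ici_le_two_mul hpq ρ hT (hρs.mono hkρ)
        ENNReal.ofReal_ne_top (hkρ x hx) hh)
    _ = _ := by
      rw [hνk, mul_comm (2 * T), mul_assoc, mul_div_assoc, ENNReal.mul_div_right_comm]

theorem IsYoung.luxNormGen_le (hΦ : IsYoung Φ) (hsub : Submult Φ) {q : ℝ}
    (hpq : p.HolderConjugate q) (hΛ : ConvexOn ℝ univ fun t ↦ Φ (|t| ^ (1 / p)))
    {m ρ : Measure α} [SFinite m] {s : Set α} (hms : ∀ᵐ x ∂m, x ∈ s) (hρs : ∀ᵐ x ∂ρ, x ∈ s)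
    {k : α → ℝ} (hk0 : ∀ x, 0 ≤ k x)
    (hkm : ∀ x ∈ s, ENNReal.ofReal (Φ (k x)) ≤ m (Iic x) ^ (-(1 / 2) : ℝ))
    {T : ℝ≥0∞} (hT : T ≠ ⊤)
    (hkρ : ∀ x ∈ s, ρ (Ici x) ^ (1 / q) ≤ T * ENNReal.ofReal (k x) ^ 2)
    {h : α → ℝ≥0∞} (hh : Measurable h) {F : α → ℝ}
    (hF : ∀ x ∈ s, ENNReal.ofReal |F x| ≤ ∫⁻ t in Ici x, h t ∂ρ) {κ : ℝ} (hκ : 0 < κ)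
    (hΦκ : Φ κ ≤ 1 / 2) :
    luxNormGen Φ m F ≤ ENNReal.ofReal κ⁻¹ * (2 * T * (∫⁻ t, h t ^ p ∂ρ) ^ (1 / p)) := by
  refine luxNormGen_le_of_forall_lintegral_le_one (inv_pos.2 hκ) fun R hR hhR ↦ ?_
  have hone := hΦ.lintegral_mul_le_one hsub hκ.le hΦκ
    (hΦ.lintegral_div_le_two hsub hpq hΛ hms hρs hk0 hkm hT hkρ hh hF hR hhR)
  have hscale : ∀ x, F x / (κ⁻¹ * R) = κ * (F x / R) := fun x ↦ by field_simp
  simpa only [hscale] using hone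

end Young

theorem ofReal_abs_intervalIntegral_le_lintegral {x b : ℝ} (hx : x ≤ b) (g : ℝ → ℝ) :
    ENNReal.ofReal |∫ t in x..b, g t| ≤ ∫⁻ t in Icc x b, ENNReal.ofReal |g t| := by
  rw [intervalIntegral.integral_of_le hx, ← integral_Icc_eq_integral_Ioc]
  simpa only [Real.enorm_eq_ofReal_abs] using enorm_integral_le_lintegral_enorm g

section WeightMeasure

/-- The measure `v(t) dt` on `[a, b]`. It turns the weighted integrals and gauge norms of the
theorem into unweighted ones over a measure. -/
def weightMeasure (v : ℝ → ℝ) (a b : ℝ) : Measure ℝ :=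
  (volume.restrict (Icc a b)).withDensity fun t ↦ ENNReal.ofReal (v t)

instance (v : ℝ → ℝ) (a b : ℝ) : SFinite (weightMeasure v a b) := by
  unfold weightMeasure
  infer_instance

variable {v : ℝ → ℝ} {a b x : ℝ}

theorem weightMeasure_univ : weightMeasure v a b univ = wInt v a b := by
  rw [weightMeasure, withDensity_apply _ .univ, Measure.restrict_univ, wInt]

theorem weightMeasure_restrict_Iic (hx : x ≤ b) :
    (weightMeasure v a b).restrict (Iic x) = weightMeasure v a x := by
  rw [weightMeasure, restrict_withDensity measurableSet_Iic,
    Measure.restrict_restrict measurableSet_Iic, show Iic x ∩ Icc a b = Icc a x by grind,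
    weightMeasure]

theorem weightMeasure_restrict_Ici (hx : a ≤ x) :
    (weightMeasure v a b).restrict (Ici x) = weightMeasure v x b := by
  rw [weightMeasure, restrict_withDensity measurableSet_Ici,
    Measure.restrict_restrict measurableSet_Ici, show Ici x ∩ Icc a b = Icc x b by grind,
    weightMeasure]

theorem weightMeasure_Iic (hx : x ≤ b) : weightMeasure v a b (Iic x) = wInt v a x := by
  rw [← Measure.restrict_apply_univ, weightMeasure_restrict_Iic hx, weightMeasure_univ]

theorem weightMeasure_Ici (hx : a ≤ x) : weightMeasure v a b (Ici x) = wInt v x b := by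
  rw [← Measure.restrict_apply_univ, weightMeasure_restrict_Ici hx, weightMeasure_univ]

theorem ae_weightMeasure_mem_Ioo : ∀ᵐ t ∂weightMeasure v a b, t ∈ Ioo a b := by
  refine (withDensity_absolutelyContinuous _ _).ae_le ?_
  rw [← Measure.restrict_congr_set Ioo_ae_eq_Icc]
  exact ae_restrict_mem measurableSet_Ioo

theorem lintegral_weightMeasure (hv : Measurable v) (g : ℝ → ℝ≥0∞) :
    ∫⁻ t, g t ∂weightMeasure v a b = ∫⁻ t in Icc a b, ENNReal.ofReal (v t) * g t :=
  lintegral_withDensity_eq_lintegral_mul_non_measurable _ hv.ennreal_ofReal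
    (ae_of_all _ fun _ ↦ ENNReal.ofReal_lt_top) g

theorem luxNorm_eq_luxNormGen {Φ : ℝ → ℝ} (hv : Measurable v) (hv0 : ∀ t, 0 ≤ v t) (F : ℝ → ℝ) :
    luxNorm Φ v a b F = luxNormGen Φ (weightMeasure v a b) F := by
  simp only [luxNorm, luxNormGen, lintegral_weightMeasure hv, ENNReal.ofReal_mul' (hv0 _),
    mul_comm (ENNReal.ofReal (v _))]

end WeightMeasure

section DualWeight

/-- The weight `τ^q w^(1-q)` dual to `w` with respect to the pairing `∫ f τ`, where `q` is the
conjugate exponent. -/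
def dualWeight (q : ℝ) (w τ : ℝ → ℝ) (t : ℝ) : ℝ := τ t ^ q * w t ^ (1 - q)

/-- The density `|f| τ / dualWeight q w τ` of `|f| τ dt` with respect to the dual weight, written
with powers. -/
def dualDensity (q : ℝ) (w τ f : ℝ → ℝ) (t : ℝ) : ℝ := |f t| * (τ t ^ (1 - q) * w t ^ (q - 1))

variable {p q : ℝ} {w τ f : ℝ → ℝ}

theorem dualWeight_nonneg {t : ℝ} (hw : 0 ≤ w t) (hτ : 0 ≤ τ t) : 0 ≤ dualWeight q w τ t :=
  mul_nonneg (Real.rpow_nonneg hτ q) (Real.rpow_nonneg hw _)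

theorem dualDensity_nonneg {t : ℝ} (hw : 0 ≤ w t) (hτ : 0 ≤ τ t) : 0 ≤ dualDensity q w τ f t :=
  mul_nonneg (abs_nonneg _) (mul_nonneg (Real.rpow_nonneg hτ _) (Real.rpow_nonneg hw _))

theorem measurable_dualWeight (hw : Measurable w) (hτ : Measurable τ) :
    Measurable (dualWeight q w τ) :=
  (hτ.pow_const q).mul (hw.pow_const _)

theorem measurable_dualDensity (hw : Measurable w) (hτ : Measurable τ) (hf : Measurable f) :
    Measurable (dualDensity q w τ f) :=
  hf.abs.mul ((hτ.pow_const _).mul (hw.pow_const _))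

theorem dualWeight_mul_dualDensity (hq : q ≠ 0) {t : ℝ} (hw : 0 < w t) (hτ : 0 ≤ τ t) :
    dualWeight q w τ t * dualDensity q w τ f t = |f t| * τ t := by
  obtain hτ0 | hτ := hτ.eq_or_lt
  · simp [dualWeight, ← hτ0, Real.zero_rpow hq]
  calc
    _ = |f t| * (τ t ^ q * τ t ^ (1 - q)) * (w t ^ (1 - q) * w t ^ (q - 1)) := by
      rw [dualWeight, dualDensity]
      ring
    _ = |f t| * τ t := by
      rw [← Real.rpow_add hτ, ← Real.rpow_add hw]
      simp

theorem dualWeight_mul_dualDensity_rpow_le (hpq : p.HolderConjugate q) {t : ℝ} (hw : 0 < w t)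
    (hτ : 0 ≤ τ t) : dualWeight q w τ t * dualDensity q w τ f t ^ p ≤ |f t| ^ p * w t := by
  obtain hτ0 | hτ := hτ.eq_or_lt
  · rw [dualWeight, ← hτ0, Real.zero_rpow hpq.symm.ne_zero, zero_mul, zero_mul]
    positivity
  have hmul := hpq.mul_eq_add
  refine le_of_eq ?_
  calc
    _ = |f t| ^ p * (τ t ^ q * τ t ^ ((1 - q) * p)) * (w t ^ (1 - q) * w t ^ ((q - 1) * p)) := by
      rw [dualWeight, dualDensity, Real.mul_rpow (abs_nonneg _) (by positivity),
        Real.mul_rpow (by positivity) (by positivity), ← Real.rpow_mul hτ.le,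
        ← Real.rpow_mul hw.le]
      ring
    _ = |f t| ^ p * w t := by
      rw [← Real.rpow_add hτ, ← Real.rpow_add hw, show q + (1 - q) * p = 0 by linarith,
        show 1 - q + (q - 1) * p = 1 by linarith, Real.rpow_zero, Real.rpow_one, mul_one]

variable {a b : ℝ}

theorem IsWeight.mono_left (hw : IsWeight w a b) {x : ℝ} (hx : a ≤ x) : IsWeight w x b :=
  ⟨hw.1, hw.2.1, ae_restrict_of_ae_restrict_of_subset (Icc_subset_Icc_left hx) hw.2.2⟩

theorem lintegral_dualDensity (hq : q ≠ 0) (hw : IsWeight w a b) (hτ : Measurable τ)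
    (hτ0 : ∀ t, 0 ≤ τ t) :
    ∫⁻ t, ENNReal.ofReal (dualDensity q w τ f t) ∂weightMeasure (dualWeight q w τ) a b =
      ∫⁻ t in Icc a b, ENNReal.ofReal |f t * τ t| := by
  rw [lintegral_weightMeasure (measurable_dualWeight hw.1 hτ)]
  refine lintegral_congr_ae (hw.2.2.mono fun t ht ↦ ?_)
  dsimp only
  rw [← ENNReal.ofReal_mul (dualWeight_nonneg ht.le (hτ0 t)),
    dualWeight_mul_dualDensity hq ht (hτ0 t), abs_mul, abs_of_nonneg (hτ0 t)]

theorem ofReal_abs_intervalIntegral_mul_le (hq : q ≠ 0) (hw : IsWeight w a b) (hτ : Measurable τ)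
    (hτ0 : ∀ t, 0 ≤ τ t) {x : ℝ} (hx : x ∈ Icc a b) :
    ENNReal.ofReal |∫ t in x..b, f t * τ t| ≤
      ∫⁻ t in Ici x, ENNReal.ofReal (dualDensity q w τ f t)
        ∂weightMeasure (dualWeight q w τ) a b := by
  rw [weightMeasure_restrict_Ici hx.1, lintegral_dualDensity hq (hw.mono_left hx.1) hτ hτ0]
  exact ofReal_abs_intervalIntegral_le_lintegral hx.2 _

theorem lintegral_dualDensity_rpow_le (hpq : p.HolderConjugate q) (hw : IsWeight w a b)
    (hτ : Measurable τ) (hτ0 : ∀ t, 0 ≤ τ t) :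
    (∫⁻ t, ENNReal.ofReal (dualDensity q w τ f t) ^ p
      ∂weightMeasure (dualWeight q w τ) a b) ^ (1 / p) ≤ lpNorm w p a b f := by
  have hp := hpq.pos
  rw [_root_.lpNorm, lintegral_weightMeasure (measurable_dualWeight hw.1 hτ)]
  gcongr ?_ ^ (1 / p)
  refine lintegral_mono_ae (hw.2.2.mono fun t ht ↦ ?_)
  rw [ENNReal.ofReal_rpow_of_nonneg (dualDensity_nonneg ht.le (hτ0 t)) hp.le,
    ← ENNReal.ofReal_mul (dualWeight_nonneg ht.le (hτ0 t))]
  exact ENNReal.ofReal_le_ofReal (dualWeight_mul_dualDensity_rpow_le hpq ht (hτ0 t))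

end DualWeight

theorem IsYoungInv.pos {Φ Φinv : ℝ → ℝ} (hinv : IsYoungInv Φ Φinv) (hΦ : IsYoung Φ) {t : ℝ}
    (ht : 0 < t) : 0 < Φinv t :=
  (hinv.1 t ht.le).lt_of_ne fun h ↦ ht.ne (by rw [← hinv.2.1 t ht.le, ← h, hΦ.2.2.1])

theorem IsYoungInv.ofReal_apply_rpow_le {Φ Φinv : ℝ → ℝ} (hinv : IsYoungInv Φ Φinv) (M : ℝ≥0∞)
    (s : ℝ) : ENNReal.ofReal (Φ (Φinv (M.toReal ^ s))) ≤ M ^ s := by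
  rw [hinv.2.1 _ (by positivity), ENNReal.toReal_rpow]
  exact ENNReal.ofReal_toReal_le

theorem orlicz_hardy_right_weighted_general
    (a b : ℝ) (p pc : ℝ) (hp : 1 < p) (hpc : pc = p / (p - 1))
    (Φ Φinv μ w τ : ℝ → ℝ)
    (hΦ : IsYoung Φ) (hsub : Submult Φ) (hinv : IsYoungInv Φ Φinv)
    (hΛ : ConvexOn ℝ univ (fun t => Φ (|t| ^ (1 / p))))
    (hμ : Measurable μ) (hμ0 : ∀ x, 0 ≤ μ x) (hw : IsWeight w a b)
    (hτ : Measurable τ) (hτ0 : ∀ x, 0 ≤ τ x)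
    (T : ℝ≥0∞)
    (hT : T = ⨆ x ∈ Ioo a b,
      ((ENNReal.ofReal (Φinv ((wInt μ a x).toReal ^ (-(1 / 2) : ℝ)))) ^ 2)⁻¹ *
        (∫⁻ t in Icc x b, ENNReal.ofReal (τ t ^ pc * w t ^ (1 - pc))) ^ (1 / pc))
    (hTfin : T < ⊤) (f : ℝ → ℝ) (hf : Measurable f) :
    luxNorm Φ μ a b (fun x => ∫ t in x..b, f t * τ t)
      ≤ ENNReal.ofReal (2 * (Φinv (1 / 2))⁻¹) * T * lpNorm w p a b f := by
  have hpq : p.HolderConjugate pc := hpc ▸ Real.HolderConjugate.conjExponent hp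
  set k : ℝ → ℝ := fun x ↦ Φinv ((wInt μ a x).toReal ^ (-(1 / 2) : ℝ))
  have hk0 : ∀ x, 0 ≤ k x := fun x ↦ hinv.1 _ (by positivity)
  have hkμ : ∀ x ∈ Ioo a b, ENNReal.ofReal (Φ (k x)) ≤
      weightMeasure μ a b (Iic x) ^ (-(1 / 2) : ℝ) := fun x hx ↦ by
    rw [weightMeasure_Iic hx.2.le]
    exact hinv.ofReal_apply_rpow_le _ _
  have hkdual : ∀ x ∈ Ioo a b, weightMeasure (dualWeight pc w τ) a b (Ici x) ^ (1 / pc) ≤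
      T * ENNReal.ofReal (k x) ^ 2 := fun x hx ↦ by
    rw [weightMeasure_Ici hx.1.le, ← ENNReal.div_le_iff_le_mul (.inr hTfin.ne)
      (.inl (ENNReal.pow_ne_top ENNReal.ofReal_ne_top)), ENNReal.div_eq_inv_mul, hT]
    exact le_iSup₂_of_le x hx le_rfl
  calc
    _ = _ := luxNorm_eq_luxNormGen hμ hμ0 _
    _ ≤ _ := hΦ.luxNormGen_le hsub hpq hΛ ae_weightMeasure_mem_Ioo ae_weightMeasure_mem_Ioo hk0 hkμ
      hTfin.ne hkdual (measurable_dualDensity hw.1 hτ hf).ennreal_ofReal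
      (fun x hx ↦ ofReal_abs_intervalIntegral_mul_le hpq.symm.ne_zero hw hτ hτ0
        (Ioo_subset_Icc_self hx))
      (hinv.pos hΦ one_half_pos) (hinv.2.1 _ one_half_pos.le).le
    _ ≤ ENNReal.ofReal (Φinv (1 / 2))⁻¹ * (2 * T * lpNorm w p a b f) := by
      gcongr
      exact lintegral_dualDensity_rpow_le hpq hw hτ hτ0
    _ = _ := by
      rw [ENNReal.ofReal_mul zero_le_two, ENNReal.ofReal_ofNat]
      ring

/-- Weighted Orlicz–Hardy inequality for `x ↦ ∫ₓ^b f τ`: if `T(p,Φ,μ,τ,w) < ∞` then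
`‖∫_•^b f τ‖_{L_μ^Φ[a,b]} ≤ C₀(Φ) T(p,Φ,μ,τ,w) ‖f‖_{L_w^p[a,b]}`. -/
theorem orlicz_hardy_right_weighted
    (a b : ℝ) (hab : a < b) (p pc : ℝ) (hp : 1 < p) (hpc : pc = p / (p - 1))
    (Φ Φinv μ w τ : ℝ → ℝ)
    (hΦ : IsYoung Φ) (hsub : Submult Φ) (hinv : IsYoungInv Φ Φinv)
    (hΛ : ConvexOn ℝ Set.univ (fun t => Φ (|t| ^ (1 / p))))
    (hμ : IsWeight μ a b) (hw : IsWeight w a b) (hτ : IsWeight τ a b)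
    (T : ℝ≥0∞)
    (hT : T = ⨆ x ∈ Set.Ioo a b,
      ((ENNReal.ofReal (Φinv ((wInt μ a x).toReal ^ (-(1/2) : ℝ)))) ^ 2)⁻¹ *
        (∫⁻ t in Set.Icc x b, ENNReal.ofReal (τ t ^ pc * w t ^ (1 - pc))) ^ (1 / pc))
    (hTfin : T < ⊤) :
    ∀ f : ℝ → ℝ, Measurable f →
      (∫⁻ t in Set.Icc a b, ENNReal.ofReal (|f t| ^ p * w t)) < ⊤ →
      luxNorm Φ μ a b (fun x => ∫ t in x..b, f t * τ t)
        ≤ ENNReal.ofReal (2 * (Φinv (1/2))⁻¹) * T * lpNorm w p a b f :=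
  fun f hf _ ↦ orlicz_hardy_right_weighted_general a b p pc hp hpc Φ Φinv μ w τ hΦ hsub hinv hΛ
    hμ.1 hμ.2.1 hw hτ.1 hτ.2.1 T hT hTfin f hf
end
end

section
/- Let 0 < b < ∞, 1 < p < ∞ with conjugate exponent p' = p/(p−1), and let w(x) = 2e^{-1/x²}/x³ on (0,b] (so that ∫_0^x w(t) dt = e^{-1/x²}). Then both quantities sup_{0<x<b} { (∫_x^b w(t) dt)^{1/p} · (∫_0^x (∫_0^t w(s) ds)^{p'} · w(t)^{1−p'} dt)^{1/p'} } and sup_{0<x<b} { (∫_0^x w(t) dt)^{1/p} · (∫_x^b (∫_t^b w(s) ds)^{p'} · w(t)^{1−p'} dt)^{1/p'} } are finite; that is, the Chua–Wheeden constant K_{p,p}(w,w,w) on [0,b] is finite. -/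
open MeasureTheory Set Filter
open scoped ENNReal NNReal

noncomputable section

/-!
If `w[0,t] ≤ D w(t)` on `[0,b]`, then `w(t)^{1-q} ≤ D^{q-1} w[0,x]^{1-q}` for `x ≤ t`, where `q` is
the conjugate exponent of `p`. With `x = t` the first inner integral is at most
`D^{q-1} w[0,b] b`; bounding `w[t,b]` by `w[0,b]`, the second one is at most
`w[0,b]^q D^{q-1} w[0,x]^{1-q} b`, where the power of `w[0,x]` cancels the outer factor
`w[0,x]^{1/p}` because `(q - 1) / q = 1 / p`. Both products are thus at most
`w[0,b] D^{1/p} b^{1/q}`. The weight `2 e^{-1/x²} / x³` satisfies `w[0,t] = (t³ / 2) w(t)`, so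
`D = b³ / 2` is admissible.
-/

section DominatedPrimitive

variable {w : ℝ → ℝ} {p q a b c d x : ℝ} {D : ℝ≥0}

lemma wInt_mono (hca : c ≤ a) (hbd : b ≤ d) : wInt w a b ≤ wInt w c d :=
  lintegral_mono_set (Icc_subset_Icc hca hbd)

lemma wInt_eq_ofReal_sub_of_hasDerivAt {F : ℝ → ℝ} (hab : a ≤ b)
    (hcont : ContinuousOn F (Icc a b)) (hderiv : ∀ x ∈ Ioo a b, HasDerivAt F (w x) x)
    (hw : ∀ x ∈ Ioo a b, 0 ≤ w x) : wInt w a b = ENNReal.ofReal (F b - F a) := by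
  have hint : IntegrableOn w (Ioc a b) :=
    intervalIntegral.integrableOn_deriv_of_nonneg hcont hderiv hw
  have hw_ae : 0 ≤ᵐ[volume.restrict (Ioc a b)] w := by
    rw [← restrict_Ioo_eq_restrict_Ioc]
    exact ae_restrict_of_forall_mem measurableSet_Ioo hw
  rw [wInt, ← restrict_Ioc_eq_restrict_Icc, ← ofReal_integral_eq_lintegral_ofReal hint hw_ae,
    ← intervalIntegral.integral_of_le hab,
    intervalIntegral.integral_eq_sub_of_hasDerivAt_of_le hab hcont hderiv
      ((intervalIntegrable_iff_integrableOn_Ioc_of_le hab).2 hint)]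

lemma setLIntegral_Icc_le_mul_of_ae_le {f : ℝ → ℝ≥0∞} {C : ℝ≥0∞}
    (hf : ∀ᵐ t ∂volume.restrict (Icc a b), f t ≤ C) :
    ∫⁻ t in Icc a b, f t ≤ C * ENNReal.ofReal (b - a) :=
  (lintegral_mono_ae hf).trans_eq (by rw [setLIntegral_const, Real.volume_Icc])

lemma ofReal_rpow_mul_rpow_one_sub_le {v : ℝ} {u V : ℝ≥0∞} (hq : 1 ≤ q) (hu : u ≠ 0)
    (huv : u ≤ D * ENNReal.ofReal v) :
    ENNReal.ofReal (V.toReal ^ q * v ^ (1 - q)) ≤ V ^ q * (D ^ (q - 1) * u ^ (1 - q)) := by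
  have hv : 0 < v := by
    by_contra! hv
    simp [ENNReal.ofReal_of_nonpos hv, hu] at huv
  have hq0 : 0 ≤ q := zero_le_one.trans hq
  have hpow : u ^ (q - 1) ≤ D ^ (q - 1) * ENNReal.ofReal v ^ (q - 1) :=
    (ENNReal.rpow_le_rpow huv (sub_nonneg.2 hq)).trans_eq
      (ENNReal.mul_rpow_of_nonneg _ _ (sub_nonneg.2 hq))
  have hinv : ENNReal.ofReal v ^ (1 - q) ≤ D ^ (q - 1) * u ^ (1 - q) := by
    have hu_pow : u ^ (q - 1) ≠ 0 := by simp [hu, hq]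
    have hD_pow : (D : ℝ≥0∞) ^ (q - 1) ≠ ⊤ :=
      ENNReal.rpow_ne_top_of_nonneg (sub_nonneg.2 hq) ENNReal.coe_ne_top
    rw [← neg_sub q 1, ENNReal.rpow_neg, ENNReal.rpow_neg, ← div_eq_mul_inv,
      ENNReal.le_div_iff_mul_le (.inl hu_pow) (.inr hD_pow), mul_comm]
    exact ENNReal.div_le_of_le_mul hpow
  rw [ENNReal.ofReal_mul (by positivity), ← ENNReal.ofReal_rpow_of_pos hv,
    ← ENNReal.ofReal_rpow_of_nonneg ENNReal.toReal_nonneg hq0]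
  gcongr
  exact ENNReal.ofReal_toReal_le

/-- The weight `w` dominates its primitive: `w[0,t] ≤ D w(t)` for almost every `t ∈ [0,b]`. This
growth condition makes the Chua–Wheeden constant of a weight of finite mass finite. It is stated
in `ℝ≥0∞`, where `ENNReal.ofReal` replaces a negative value of `w` by `0` as `wInt` does. -/
def PrimitiveDominated (w : ℝ → ℝ) (D : ℝ≥0) (b : ℝ) : Prop :=
  ∀ᵐ t ∂volume.restrict (Icc 0 b), wInt w 0 t ≤ D * ENNReal.ofReal (w t)

lemma lintegral_primitive_rpow_mul_rpow_one_sub_le (hq : 1 ≤ q) (hD : PrimitiveDominated w D b)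
    (hxb : x ≤ b) :
    ∫⁻ t in Icc 0 x, ENNReal.ofReal ((wInt w 0 t).toReal ^ q * w t ^ (1 - q)) ≤
      D ^ (q - 1) * wInt w 0 b * ENNReal.ofReal b := by
  suffices h : ∀ᵐ t ∂volume.restrict (Icc 0 x),
      ENNReal.ofReal ((wInt w 0 t).toReal ^ q * w t ^ (1 - q)) ≤ D ^ (q - 1) * wInt w 0 b by
    refine (setLIntegral_Icc_le_mul_of_ae_le h).trans ?_
    gcongr
    simpa using hxb
  filter_upwards [ae_restrict_of_ae_restrict_of_subset (Icc_subset_Icc_right hxb) hD,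
    ae_restrict_mem measurableSet_Icc] with t hDt ht
  rcases eq_or_ne (wInt w 0 t) 0 with hW | hW
  · simp [hW, Real.zero_rpow (zero_lt_one.trans_le hq).ne']
  have hW_top : wInt w 0 t ≠ ⊤ := ne_top_of_le_ne_top (by finiteness) hDt
  calc ENNReal.ofReal ((wInt w 0 t).toReal ^ q * w t ^ (1 - q))
      ≤ wInt w 0 t ^ q * (D ^ (q - 1) * wInt w 0 t ^ (1 - q)) :=
        ofReal_rpow_mul_rpow_one_sub_le hq hW hDt
    _ = D ^ (q - 1) * wInt w 0 t := by
        rw [mul_left_comm, ← ENNReal.rpow_add _ _ hW hW_top, add_sub_cancel, ENNReal.rpow_one]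
    _ ≤ D ^ (q - 1) * wInt w 0 b := by
        gcongr
        exact wInt_mono le_rfl (ht.2.trans hxb)

lemma lintegral_tail_rpow_mul_rpow_one_sub_le (hq : 1 ≤ q) (hD : PrimitiveDominated w D b)
    (hx : 0 ≤ x) (hW : wInt w 0 x ≠ 0) :
    ∫⁻ t in Icc x b, ENNReal.ofReal ((wInt w t b).toReal ^ q * w t ^ (1 - q)) ≤
      wInt w 0 b ^ q * (D ^ (q - 1) * wInt w 0 x ^ (1 - q)) * ENNReal.ofReal b := by
  suffices h : ∀ᵐ t ∂volume.restrict (Icc x b),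
      ENNReal.ofReal ((wInt w t b).toReal ^ q * w t ^ (1 - q)) ≤
        wInt w 0 b ^ q * (D ^ (q - 1) * wInt w 0 x ^ (1 - q)) by
    refine (setLIntegral_Icc_le_mul_of_ae_le h).trans ?_
    gcongr
    simpa using hx
  filter_upwards [ae_restrict_of_ae_restrict_of_subset (Icc_subset_Icc_left hx) hD,
    ae_restrict_mem measurableSet_Icc] with t hDt ht
  calc ENNReal.ofReal ((wInt w t b).toReal ^ q * w t ^ (1 - q))
      ≤ wInt w t b ^ q * (D ^ (q - 1) * wInt w 0 x ^ (1 - q)) :=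
        ofReal_rpow_mul_rpow_one_sub_le hq hW ((wInt_mono le_rfl ht.1).trans hDt)
    _ ≤ wInt w 0 b ^ q * (D ^ (q - 1) * wInt w 0 x ^ (1 - q)) := by
        gcongr
        exact wInt_mono (hx.trans ht.1) le_rfl

lemma sub_one_mul_one_div_conj (hpq : p.HolderConjugate q) : (q - 1) * (1 / q) = 1 / p := by
  rw [sub_mul, mul_one_div_cancel hpq.symm.ne_zero, one_mul, one_div, one_div, hpq.symm.one_sub_inv]

lemma wInt_rpow_mul_lintegral_primitive_rpow_le (hpq : p.HolderConjugate q)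
    (hD : PrimitiveDominated w D b) (hx : 0 ≤ x) (hxb : x ≤ b) :
    wInt w x b ^ (1 / p) *
        (∫⁻ t in Icc 0 x, ENNReal.ofReal ((wInt w 0 t).toReal ^ q * w t ^ (1 - q))) ^ (1 / q) ≤
      wInt w 0 b * D ^ (1 / p) * ENNReal.ofReal b ^ (1 / q) := by
  have hp0 : 0 ≤ 1 / p := hpq.one_div_nonneg
  have hq0 : 0 ≤ 1 / q := hpq.symm.one_div_nonneg
  have hB : wInt w 0 b ^ (1 / p) * wInt w 0 b ^ (1 / q) = wInt w 0 b := by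
    rw [← ENNReal.rpow_add_of_nonneg _ _ hp0 hq0, hpq.one_div_add_one_div, one_div_one,
      ENNReal.rpow_one]
  calc _ ≤ wInt w 0 b ^ (1 / p) *
          (D ^ (q - 1) * wInt w 0 b * ENNReal.ofReal b) ^ (1 / q) := by
        gcongr
        · exact wInt_mono hx le_rfl
        · exact lintegral_primitive_rpow_mul_rpow_one_sub_le hpq.symm.lt.le hD hxb
    _ = wInt w 0 b ^ (1 / p) * wInt w 0 b ^ (1 / q) * D ^ (1 / p) *
          ENNReal.ofReal b ^ (1 / q) := by
        rw [ENNReal.mul_rpow_of_nonneg _ _ hq0, ENNReal.mul_rpow_of_nonneg _ _ hq0,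
          ← ENNReal.rpow_mul, sub_one_mul_one_div_conj hpq]
        ring
    _ = _ := by rw [hB]

lemma wInt_rpow_mul_lintegral_tail_rpow_le (hpq : p.HolderConjugate q)
    (hD : PrimitiveDominated w D b) (hx : 0 ≤ x) :
    wInt w 0 x ^ (1 / p) *
        (∫⁻ t in Icc x b, ENNReal.ofReal ((wInt w t b).toReal ^ q * w t ^ (1 - q))) ^ (1 / q) ≤
      wInt w 0 b * D ^ (1 / p) * ENNReal.ofReal b ^ (1 / q) := by
  rcases eq_or_ne (wInt w 0 x) 0 with hW | hW
  · simp [hW, ENNReal.zero_rpow_of_pos (inv_pos.2 hpq.pos)]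
  have hq0 : 0 ≤ 1 / q := hpq.symm.one_div_nonneg
  have hexp : (1 - q) * (1 / q) = -(1 / p) := by
    rw [← sub_one_mul_one_div_conj hpq]
    ring
  calc _ ≤ wInt w 0 x ^ (1 / p) *
          (wInt w 0 b ^ q * (D ^ (q - 1) * wInt w 0 x ^ (1 - q)) * ENNReal.ofReal b) ^ (1 / q) := by
        gcongr
        exact lintegral_tail_rpow_mul_rpow_one_sub_le hpq.symm.lt.le hD hx hW
    _ = wInt w 0 x ^ (1 / p) * (wInt w 0 x ^ (1 / p))⁻¹ *
          (wInt w 0 b * D ^ (1 / p) * ENNReal.ofReal b ^ (1 / q)) := by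
        simp only [ENNReal.mul_rpow_of_nonneg _ _ hq0, ← ENNReal.rpow_mul, hexp,
          sub_one_mul_one_div_conj hpq, mul_one_div_cancel hpq.symm.ne_zero, ENNReal.rpow_one,
          ENNReal.rpow_neg]
        ring
    _ ≤ _ := mul_le_of_le_one_left' (ENNReal.mul_inv_le_one _)

theorem degenerate_weight_Kpp_finite_general (hpq : p.HolderConjugate q)
    (hfin : wInt w 0 b ≠ ⊤) (hD : PrimitiveDominated w D b) :
    (⨆ x ∈ Ioo 0 b, wInt w x b ^ (1 / p) *
      (∫⁻ t in Icc 0 x,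
        ENNReal.ofReal ((wInt w 0 t).toReal ^ q * w t ^ (1 - q))) ^ (1 / q)) < ⊤ ∧
    (⨆ x ∈ Ioo 0 b, wInt w 0 x ^ (1 / p) *
      (∫⁻ t in Icc x b,
        ENNReal.ofReal ((wInt w t b).toReal ^ q * w t ^ (1 - q))) ^ (1 / q)) < ⊤ := by
  have hp0 : 0 ≤ 1 / p := hpq.one_div_nonneg
  have hq0 : 0 ≤ 1 / q := hpq.symm.one_div_nonneg
  have hbound : wInt w 0 b * D ^ (1 / p) * ENNReal.ofReal b ^ (1 / q) < ⊤ := by finiteness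
  constructor
  · refine lt_of_le_of_lt (iSup₂_le fun x hx ↦ ?_) hbound
    exact wInt_rpow_mul_lintegral_primitive_rpow_le hpq hD hx.1.le hx.2.le
  · refine lt_of_le_of_lt (iSup₂_le fun x hx ↦ ?_) hbound
    exact wInt_rpow_mul_lintegral_tail_rpow_le hpq hD hx.1.le

end DominatedPrimitive

section DegenerateWeight

variable {t x : ℝ}

/-- The infinitely degenerate weight `2e^{-1/x²}/x³`, whose value at `0` is `0`. -/
def degenerateWeight (x : ℝ) : ℝ := 2 * Real.exp (-(1 / x ^ 2)) / x ^ 3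

-- At `0` the expression `exp (-(1 / x ^ 2))` takes the junk value `1`, so it is not continuous
-- there; `expNegInvGlue (x ^ 2)` is the primitive of the weight that extends smoothly across `0`.
lemma expNegInvGlue_sq (hx : x ≠ 0) : expNegInvGlue (x ^ 2) = Real.exp (-(1 / x ^ 2)) := by
  simp [expNegInvGlue, hx]

lemma hasDerivAt_expNegInvGlue_sq (x : ℝ) :
    HasDerivAt (fun y ↦ expNegInvGlue (y ^ 2)) (degenerateWeight x) x := by
  have hglue : HasDerivAt expNegInvGlue (((x ^ 2) ^ 2)⁻¹ * expNegInvGlue (x ^ 2)) (x ^ 2) := by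
    simpa using expNegInvGlue.hasDerivAt_polynomial_eval_inv_mul 1 (x ^ 2)
  refine (hglue.comp (h := (· ^ 2)) x (hasDerivAt_pow 2 x)).congr_deriv ?_
  rcases eq_or_ne x 0 with rfl | hx
  · simp [degenerateWeight]
  · rw [expNegInvGlue_sq hx, degenerateWeight]
    field_simp
    push_cast
    ring

lemma wInt_degenerateWeight (ht : 0 < t) :
    wInt degenerateWeight 0 t = ENNReal.ofReal (Real.exp (-(1 / t ^ 2))) := by
  have hderiv := hasDerivAt_expNegInvGlue_sq
  rw [wInt_eq_ofReal_sub_of_hasDerivAt ht.le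
    (fun x _ ↦ (hderiv x).continuousAt.continuousWithinAt) (fun x _ ↦ hderiv x)
    (fun x hx ↦ by have hx0 := hx.1; unfold degenerateWeight; positivity), expNegInvGlue_sq ht.ne']
  simp

lemma primitiveDominated_degenerateWeight (b : ℝ) :
    PrimitiveDominated degenerateWeight (b ^ 3 / 2).toNNReal b := by
  refine ae_restrict_of_forall_mem measurableSet_Icc fun t ht ↦ ?_
  rcases ht.1.eq_or_lt with rfl | ht0
  · simp [wInt]
  have hexp : Real.exp (-(1 / t ^ 2)) = t ^ 3 / 2 * degenerateWeight t := by
    rw [degenerateWeight]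
    field_simp
  rw [wInt_degenerateWeight ht0, hexp, ENNReal.ofReal_mul (by positivity)]
  change _ ≤ ENNReal.ofReal (b ^ 3 / 2) * _
  gcongr
  exact ht.2

end DegenerateWeight

/-- For the infinitely degenerate weight `w(x) = 2e^{-1/x²}/x³` on `(0,b]`, both suprema
in the Chua–Wheeden constant `K_{p,p}(w,w,w)` are finite. -/
theorem degenerate_weight_Kpp_finite
    (b p pc : ℝ) (hb : 0 < b) (hp : 1 < p) (hpc : pc = p / (p - 1))
    (w : ℝ → ℝ) (hw : w = fun x => 2 * Real.exp (-(1 / x ^ 2)) / x ^ 3) :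
    (⨆ x ∈ Set.Ioo (0:ℝ) b,
        (wInt w x b) ^ (1 / p) *
          (∫⁻ t in Set.Icc (0:ℝ) x,
            ENNReal.ofReal ((wInt w 0 t).toReal ^ pc * w t ^ (1 - pc))) ^ (1 / pc)) < ⊤ ∧
    (⨆ x ∈ Set.Ioo (0:ℝ) b,
        (wInt w 0 x) ^ (1 / p) *
          (∫⁻ t in Set.Icc x b,
            ENNReal.ofReal ((wInt w t b).toReal ^ pc * w t ^ (1 - pc))) ^ (1 / pc)) < ⊤ := by
  have hpq : p.HolderConjugate pc := (Real.holderConjugate_iff_eq_conjExponent hp).2 hpc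
  obtain rfl : w = degenerateWeight := hw
  exact degenerate_weight_Kpp_finite_general hpq (by simp [wInt_degenerateWeight hb])
    (primitiveDominated_degenerateWeight b)
end
end
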